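/- arXiv:0812.4209 — 2 statements merged into one kernel-verified Lean document; each statement's English description precedes it below -/
import Mathlib

section
/- For every positive integer k there exist complex constants c_1, …, c_{k+1} (equivalently, a polynomial P of degree k+1 without constant term) with the following property: for every function f : ℝ → ℂ of class C^{k+1} such that for each ℓ ∈ {0, 1, …, k+1} the function t ↦ t^ℓ f^{(ℓ)}(t) is integrable on ℝ and tends to 0 as t → ±∞, and for every v ∈ ℝ, one has ∫_ℝ f(t) cos(vt) dt = Σ_{j=1}^{k+1} c_j ∫_ℝ (O^j f)(t) · 𝓑_k(t v) dt, where 𝓑_k(u) = ∫_0^1 (1−s²)^k cos(su) ds. (This is Lemma 5.1 of the paper, with the modified Bessel kernel 𝓙_{k+1/2}(u) = J_{k+1/2}(u)/u^{k+1/2} written, up to a positive constant factor, as the elementary Poisson-type integral 𝓑_k.) -/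
open MeasureTheory Filter

noncomputable section

/-- The operator `(O f)(t) = t * f'(t)` on functions on the real line. -/
def Oop : (ℝ → ℂ) → (ℝ → ℂ) := fun f t => (t : ℂ) * deriv f t

/-- `𝓑_k(u) = ∫_0^1 (1 - s²)^k cos (s u) ds`. -/
def Bk (k : ℕ) (u : ℝ) : ℝ := ∫ s in (0:ℝ)..1, (1 - s ^ 2) ^ k * Real.cos (s * u)

/-
Let `O` also act on real functions. By the Leibniz rule `(t b g)' = (b + O b) g + b (O g)`, and
`t b(t) g(t) → 0` at `±∞` when `b` is bounded and `g`, `O g` are integrable, so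
`∫ (b + O b) g = -∫ b (O g)`. As `O` commutes with dilations, this applies to `b = 𝓑_k(· v)`,
where an integration by parts in `s` gives `𝓑_0 + O 𝓑_0 = cos` and
`𝓑_{m+1} + O 𝓑_{m+1} = 2 (m + 1) (𝓑_m - 𝓑_{m+1})`. Hence the cosine transform of `f` is the
`𝓑_0`-transform of `-O f`, and replacing `𝓑_m` by `𝓑_{m+1}` costs a factor `1 - O / (2 (m + 1))`.
-/

variable {E : Type*} [NormedAddCommGroup E] [NormedSpace ℝ E]

/-- The Euler operator `(O f)(t) = t f'(t)` on functions with values in a real normed space. The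
operator `Oop` is the case of values in `ℂ`; the case of values in `ℝ` acts on the kernels. -/
def eulerOp (f : ℝ → E) : ℝ → E := fun t => t • deriv f t

lemma Oop_eq_eulerOp : Oop = eulerOp := by
  funext f t
  simp only [Oop, eulerOp, Complex.real_smul]

lemma contDiff_eulerOp {n : ℕ} {f : ℝ → E} (hf : ContDiff ℝ (n + 1 : ℕ) f) :
    ContDiff ℝ n (eulerOp f) :=
  contDiff_id.smul (contDiff_succ_iff_deriv.1 (by exact_mod_cast hf)).2.2

lemma iteratedDeriv_eulerOp {n : ℕ} {f : ℝ → E} (hf : ContDiff ℝ (n + 1 : ℕ) f) {ℓ : ℕ}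
    (hℓ : ℓ ≤ n) (t : ℝ) :
    iteratedDeriv ℓ (eulerOp f) t =
      t • iteratedDeriv (ℓ + 1) f t + (ℓ : ℝ) • iteratedDeriv ℓ f t := by
  induction ℓ generalizing t with
  | zero => simp [eulerOp]
  | succ ℓ ih =>
    have hderiv (j : ℕ) (hj : j < n + 1) :
        HasDerivAt (iteratedDeriv j f) (iteratedDeriv (j + 1) f t) t := by
      rw [iteratedDeriv_succ]
      exact (hf.differentiable_iteratedDeriv j (by exact_mod_cast hj) t).hasDerivAt
    have hsum := ((hasDerivAt_id' t).fun_smul (hderiv (ℓ + 1) (by lia))).fun_add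
      ((hderiv ℓ (by lia)).fun_const_smul (ℓ : ℝ))
    rw [iteratedDeriv_succ, funext (ih (by lia)), hsum.deriv]
    push_cast
    module

lemma eulerOp_comp_mul_right (b : ℝ → E) (v t : ℝ) :
    eulerOp (fun s => b (s * v)) t = eulerOp b (t * v) := by
  simp only [eulerOp, mul_comm _ v, deriv_comp_mul_left, smul_smul]

/-- The class of functions `f` of class `C^n` for which all `t ↦ t^ℓ f^(ℓ)(t)`, `ℓ ≤ n`, are
integrable. It is the domain on which the powers `O^j`, `j ≤ n`, act with integrable values. -/
structure EulerIntegrable (n : ℕ) (f : ℝ → E) : Prop where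
  contDiff : ContDiff ℝ n f
  integrable_pow_smul : ∀ ℓ ≤ n, Integrable fun t : ℝ => t ^ ℓ • iteratedDeriv ℓ f t

namespace EulerIntegrable

variable {n m : ℕ} {f : ℝ → E}

lemma mono (hf : EulerIntegrable n f) (hmn : m ≤ n) : EulerIntegrable m f :=
  ⟨hf.contDiff.of_le (by exact_mod_cast hmn),
    fun ℓ hℓ => hf.integrable_pow_smul ℓ (hℓ.trans hmn)⟩

protected lemma integrable (hf : EulerIntegrable n f) : Integrable f := by
  simpa using hf.integrable_pow_smul 0 n.zero_le

protected lemma eulerOp (hf : EulerIntegrable (n + 1) f) : EulerIntegrable n (eulerOp f) := by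
  refine ⟨contDiff_eulerOp hf.contDiff, fun ℓ hℓ => ?_⟩
  have heq : (fun t : ℝ => t ^ ℓ • iteratedDeriv ℓ (_root_.eulerOp f) t) = fun t : ℝ =>
      t ^ (ℓ + 1) • iteratedDeriv (ℓ + 1) f t + (ℓ : ℝ) • t ^ ℓ • iteratedDeriv ℓ f t := by
    funext t
    rw [iteratedDeriv_eulerOp hf.contDiff hℓ]
    module
  rw [heq]
  exact (hf.integrable_pow_smul (ℓ + 1) (by lia)).add
    ((hf.integrable_pow_smul ℓ (by lia)).smul (ℓ : ℝ))

lemma iterate_eulerOp (j : ℕ) (hf : EulerIntegrable (n + j) f) :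
    EulerIntegrable n (_root_.eulerOp^[j] f) := by
  induction j generalizing f with
  | zero => exact hf
  | succ j ih => exact ih hf.eulerOp

end EulerIntegrable

section IntegrationByParts

lemma eq_zero_of_tendsto_id_smul {l : Filter ℝ} [l.NeBot] [TendstoIxxClass Set.Icc l l]
    (hl : Tendsto (fun t : ℝ => |t|) l atTop) {g : ℝ → E} (hg : Integrable g) {L : E}
    (hL : Tendsto (fun t => t • g t) l (nhds L)) : L = 0 := by
  by_contra hL0
  have hone : (fun _ : ℝ => (1 : ℝ)) =O[l] fun t => t • g t :=
    (Asymptotics.isBigO_const_left_iff_pos_le_norm one_ne_zero).2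
      ⟨‖L‖ / 2, by positivity,
        hL.norm.eventually_const_le (half_lt_self (norm_pos_iff.2 hL0))⟩
  have hne : ∀ᶠ t in l, t ≠ 0 :=
    (hl.eventually_gt_atTop 0).mono fun _ => abs_pos.1
  have hlog : deriv Real.log =O[l] g := by
    refine ((Asymptotics.isBigO_refl (fun t : ℝ => t⁻¹) l).smul hone).congr' ?_ ?_
    · exact .of_forall fun t => by simp
    · filter_upwards [hne] with t ht using inv_smul_smul₀ ht (g t)
  have hlog_atTop : Tendsto (fun t => ‖Real.log t‖) l atTop :=
    tendsto_norm_atTop_atTop.comp ((Real.tendsto_log_atTop.comp hl).congr Real.log_abs)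
  exact not_integrableOn_of_tendsto_norm_atTop_of_deriv_isBigO_filter l univ_mem
    (hne.mono fun _ => Real.differentiableAt_log) hlog_atTop hlog hg.integrableOn

lemma integrable_smul_of_abs_le {g : ℝ → E} {b : ℝ → ℝ} {M : ℝ} (hg : Integrable g)
    (hb : Continuous b) (hM : ∀ t, |b t| ≤ M) : Integrable fun t => b t • g t :=
  hg.bdd_smul M hb.aestronglyMeasurable (.of_forall hM)

variable [CompleteSpace E] {g : ℝ → E}

lemma EulerIntegrable.tendsto_id_smul (hg : EulerIntegrable 1 g) :
    Tendsto (fun t => t • g t) atBot (nhds 0) ∧ Tendsto (fun t => t • g t) atTop (nhds 0) := by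
  have hderiv (t : ℝ) : HasDerivAt (fun t => t • g t) (eulerOp g t + g t) t := by
    simpa [eulerOp] using
      (hasDerivAt_id' t).fun_smul (hg.contDiff.differentiable (by norm_num) t).hasDerivAt
  have hint : Integrable fun t => eulerOp g t + g t :=
    hg.eulerOp.integrable.add hg.integrable
  have hbot := tendsto_limUnder_of_hasDerivAt_of_integrableOn_Iic (a := 0)
    (fun t _ => hderiv t) hint.integrableOn
  have htop := tendsto_limUnder_of_hasDerivAt_of_integrableOn_Ioi (a := 0)
    (fun t _ => hderiv t) hint.integrableOn
  exact ⟨eq_zero_of_tendsto_id_smul tendsto_abs_atBot_atTop hg.integrable hbot ▸ hbot,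
    eq_zero_of_tendsto_id_smul tendsto_abs_atTop_atTop hg.integrable htop ▸ htop⟩

lemma integral_add_eulerOp_smul {b : ℝ → ℝ} {M : ℝ} (hg : EulerIntegrable 1 g)
    (hb : Differentiable ℝ b) (hM : ∀ t, |b t| ≤ M)
    (hint : Integrable fun t => (b t + eulerOp b t) • g t) :
    ∫ t, (b t + eulerOp b t) • g t = -∫ t, b t • eulerOp g t := by
  have hderiv (t : ℝ) : HasDerivAt (fun t => b t • t • g t)
      ((b t + eulerOp b t) • g t + b t • eulerOp g t) t := by
    have hg' := (hg.contDiff.differentiable (by norm_num) t).hasDerivAt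
    refine ((hb t).hasDerivAt.smul ((hasDerivAt_id' t).fun_smul hg')).congr_deriv ?_
    simp only [eulerOp, smul_eq_mul]
    module
  have hintO : Integrable fun t => b t • eulerOp g t :=
    integrable_smul_of_abs_le hg.eulerOp.integrable hb.continuous hM
  have hlim {l : Filter ℝ} (h : Tendsto (fun t => t • g t) l (nhds 0)) :
      Tendsto (fun t => b t • t • g t) l (nhds 0) :=
    isBoundedUnder_of ⟨M, hM⟩ |>.smul_tendsto_zero h
  have hzero := integral_of_hasDerivAt_of_tendsto hderiv (hint.add hintO)
    (hlim hg.tendsto_id_smul.1) (hlim hg.tendsto_id_smul.2)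
  rw [integral_add hint hintO, sub_zero] at hzero
  exact eq_neg_of_add_eq_zero_left hzero

end IntegrationByParts

section Kernel

open intervalIntegral

lemma hasDerivAt_integral_mul_cos {φ : ℝ → ℝ} (hφ : Continuous φ) (a b u : ℝ) :
    HasDerivAt (fun u => ∫ s in a..b, φ s * Real.cos (s * u))
      (∫ s in a..b, φ s * (-Real.sin (s * u) * s)) u := by
  refine (hasDerivAt_integral_of_dominated_loc_of_deriv_le (bound := fun s => |φ s| * |s|)
    (F' := fun u s => φ s * (-Real.sin (s * u) * s)) univ_mem
    (.of_forall fun u => Continuous.aestronglyMeasurable (by fun_prop))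
    (Continuous.intervalIntegrable (by fun_prop) _ _)
    (Continuous.aestronglyMeasurable (by fun_prop))
    (.of_forall fun s _ u _ => ?_)
    (Continuous.intervalIntegrable (by fun_prop) _ _)
    (.of_forall fun s _ u _ => ?_)).2
  · rw [norm_mul, norm_mul, norm_neg]
    gcongr
    · exact le_rfl
    · exact mul_le_of_le_one_left (abs_nonneg s) (Real.abs_sin_le_one _)
  · exact (hasDerivAt_const_mul s).cos.const_mul (φ s)

lemma hasDerivAt_Bk (m : ℕ) (u : ℝ) :
    HasDerivAt (Bk m) (∫ s in (0 : ℝ)..1, (1 - s ^ 2) ^ m * (-Real.sin (s * u) * s)) u :=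
  hasDerivAt_integral_mul_cos (by fun_prop) 0 1 u

lemma differentiable_Bk (m : ℕ) : Differentiable ℝ (Bk m) :=
  fun u => (hasDerivAt_Bk m u).differentiableAt

lemma abs_Bk_le_one (m : ℕ) (u : ℝ) : |Bk m u| ≤ 1 := by
  have hbound : ∀ s ∈ Set.uIoc (0 : ℝ) 1, ‖(1 - s ^ 2) ^ m * Real.cos (s * u)‖ ≤ 1 := by
    intro s hs
    obtain ⟨hs0, hs1⟩ := Set.uIoc_of_le (zero_le_one' ℝ) ▸ hs
    have hw : |1 - s ^ 2| ≤ 1 := abs_le.2 ⟨by nlinarith, by nlinarith⟩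
    rw [norm_mul, norm_pow]
    exact mul_le_one₀ (pow_le_one₀ (abs_nonneg _) hw) (abs_nonneg _) (Real.abs_cos_le_one _)
  simpa [Bk] using norm_integral_le_of_norm_le_const hbound

lemma hasDerivAt_mul_cos_mul (u s : ℝ) : HasDerivAt (fun s => s * Real.cos (s * u))
    (Real.cos (s * u) + u * (-Real.sin (s * u) * s)) s :=
  ((hasDerivAt_id s).mul (hasDerivAt_mul_const u).cos).congr_deriv (by simp only [id]; ring)

lemma Bk_add_eulerOp_Bk (m : ℕ) (u : ℝ) : Bk m u + eulerOp (Bk m) u =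
    ∫ s in (0 : ℝ)..1,
      (1 - s ^ 2) ^ m * (Real.cos (s * u) + u * (-Real.sin (s * u) * s)) := by
  rw [eulerOp, (hasDerivAt_Bk m u).deriv, smul_eq_mul, Bk, ← intervalIntegral.integral_const_mul,
    ← integral_add (Continuous.intervalIntegrable (by fun_prop) _ _)
      (Continuous.intervalIntegrable (by fun_prop) _ _)]
  congr 1 with s
  ring

lemma Bk_zero_add_eulerOp_Bk_zero (u : ℝ) : Bk 0 u + eulerOp (Bk 0) u = Real.cos u := by
  rw [Bk_add_eulerOp_Bk]
  simp only [pow_zero, one_mul]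
  rw [integral_eq_sub_of_hasDerivAt (fun s _ => hasDerivAt_mul_cos_mul u s)
    (Continuous.intervalIntegrable (by fun_prop) _ _)]
  simp

lemma Bk_succ_add_eulerOp_Bk_succ (m : ℕ) (u : ℝ) :
    Bk (m + 1) u + eulerOp (Bk (m + 1)) u = 2 * (m + 1) * (Bk m u - Bk (m + 1) u) := by
  have hpow (s : ℝ) : HasDerivAt (fun s : ℝ => (1 - s ^ 2) ^ (m + 1))
      (-(2 * (m + 1) * s * (1 - s ^ 2) ^ m)) s := by
    refine (((hasDerivAt_pow 2 s).const_sub 1).pow (m + 1)).congr_deriv ?_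
    push_cast
    ring
  calc Bk (m + 1) u + eulerOp (Bk (m + 1)) u
      = ∫ s in (0 : ℝ)..1, (1 - s ^ 2) ^ (m + 1) *
          (Real.cos (s * u) + u * (-Real.sin (s * u) * s)) := Bk_add_eulerOp_Bk (m + 1) u
    _ = ∫ s in (0 : ℝ)..1, 2 * (m + 1) * s * (1 - s ^ 2) ^ m * (s * Real.cos (s * u)) := by
        rw [integral_mul_deriv_eq_deriv_mul (fun s _ => hpow s)
          (fun s _ => hasDerivAt_mul_cos_mul u s)
          (Continuous.intervalIntegrable (by fun_prop) _ _)
          (Continuous.intervalIntegrable (by fun_prop) _ _)]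
        simp
    _ = ∫ s in (0 : ℝ)..1, 2 * (m + 1) *
          ((1 - s ^ 2) ^ m * Real.cos (s * u) - (1 - s ^ 2) ^ (m + 1) * Real.cos (s * u)) := by
        congr 1 with s
        ring
    _ = 2 * (m + 1) * (Bk m u - Bk (m + 1) u) := by
        rw [intervalIntegral.integral_const_mul,
          integral_sub (Continuous.intervalIntegrable (by fun_prop) _ _)
            (Continuous.intervalIntegrable (by fun_prop) _ _), Bk, Bk]

end Kernel

section Transform

variable {g : ℝ → E}

lemma integrable_Bk_smul (hg : Integrable g) (m : ℕ) (v : ℝ) :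
    Integrable fun t => Bk m (t * v) • g t :=
  integrable_smul_of_abs_le hg ((differentiable_Bk m).continuous.comp (continuous_mul_const v))
    fun t => abs_Bk_le_one m (t * v)

variable [CompleteSpace E]

lemma integral_add_eulerOp_comp_mul_right_smul {b : ℝ → ℝ} {M : ℝ} (hg : EulerIntegrable 1 g)
    (hb : Differentiable ℝ b) (hM : ∀ t, |b t| ≤ M) (v : ℝ)
    (hint : Integrable fun t => (b (t * v) + eulerOp b (t * v)) • g t) :
    ∫ t, (b (t * v) + eulerOp b (t * v)) • g t = -∫ t, b (t * v) • eulerOp g t := by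
  simp only [← eulerOp_comp_mul_right b v] at hint ⊢
  exact integral_add_eulerOp_smul hg (by fun_prop) (fun t => hM (t * v)) hint

lemma integral_cos_smul_eq_neg_integral_Bk_zero_smul (hg : EulerIntegrable 1 g) (v : ℝ) :
    ∫ t, Real.cos (v * t) • g t = -∫ t, Bk 0 (t * v) • eulerOp g t := by
  have hint : Integrable fun t => Real.cos (t * v) • g t :=
    integrable_smul_of_abs_le hg.integrable (by fun_prop) fun t => Real.abs_cos_le_one (t * v)
  simp only [← Bk_zero_add_eulerOp_Bk_zero, mul_comm v] at hint ⊢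
  exact integral_add_eulerOp_comp_mul_right_smul hg (differentiable_Bk 0) (abs_Bk_le_one 0) v hint

lemma integral_Bk_smul_eq_integral_Bk_succ_smul (hg : EulerIntegrable 1 g) (m : ℕ) (v : ℝ) :
    ∫ t, Bk m (t * v) • g t = (∫ t, Bk (m + 1) (t * v) • g t) -
      (2 * (m + 1) : ℝ)⁻¹ • ∫ t, Bk (m + 1) (t * v) • eulerOp g t := by
  have hint := integrable_Bk_smul hg.integrable (v := v)
  have hkernel (t : ℝ) : (Bk (m + 1) (t * v) + eulerOp (Bk (m + 1)) (t * v)) • g t =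
      (2 * (m + 1) : ℝ) • (Bk m (t * v) • g t - Bk (m + 1) (t * v) • g t) := by
    rw [Bk_succ_add_eulerOp_Bk_succ]
    module
  have hparts := integral_add_eulerOp_comp_mul_right_smul hg (differentiable_Bk (m + 1))
    (abs_Bk_le_one (m + 1)) v (by
      simp only [hkernel]
      exact ((hint m).sub (hint (m + 1))).smul _)
  simp only [hkernel] at hparts
  rw [integral_smul, integral_sub (hint m) (hint (m + 1))] at hparts
  have hne : (2 * (m + 1) : ℝ) ≠ 0 := by positivity
  rw [← eq_inv_smul_iff₀ hne, smul_neg] at hparts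
  rw [sub_eq_add_neg, ← hparts, add_sub_cancel]

end Transform

section Symbol

open Polynomial

lemma sum_smul_eq_sum_mul_one_sub_C_mul_X {R M : Type*} [Ring R] [AddCommGroup M] [Module R M]
    (p : R[X]) (a : R) {I J : ℕ → M}
    (h : ∀ j ∈ p.support, I j = J j - a • J (j + 1)) :
    p.sum (fun j c => c • I j) = (p * (1 - C a * X)).sum fun j c => c • J j := by
  let L : R[X] →ₗ[R] M := lsum fun j => LinearMap.toSpanSingleton R M (J j)
  have hL (j : ℕ) (c : R) : L (monomial j c) = c • J j := by
    simp [L, lsum]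
  calc p.sum (fun j c => c • I j)
      = ∑ j ∈ p.support, L (monomial j (p.coeff j) * (1 - C a * X)) := by
        rw [sum_def]
        refine Finset.sum_congr rfl fun j hj => ?_
        have hmul : monomial j (p.coeff j) * (1 - C a * X) =
            monomial j (p.coeff j) - monomial (j + 1) (p.coeff j * a) := by
          rw [mul_sub, mul_one, C_mul_X_eq_monomial, monomial_mul_monomial]
        rw [hmul, map_sub, hL, hL, h j hj, smul_sub, smul_smul]
    _ = L (p * (1 - C a * X)) := by
        rw [← map_sum, ← Finset.sum_mul, ← as_sum_support]

/-- The polynomial `P_k` for which the cosine transform of `f` is the transform of `P_k(O) f` with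
kernel `𝓑_k`. -/
def besselSymbol (k : ℕ) : ℝ[X] :=
  -X * ∏ m ∈ Finset.range k, (1 - C (2 * (m + 1) : ℝ)⁻¹ * X)

lemma besselSymbol_succ (k : ℕ) :
    besselSymbol (k + 1) = besselSymbol k * (1 - C (2 * (k + 1) : ℝ)⁻¹ * X) := by
  rw [besselSymbol, Finset.prod_range_succ, ← mul_assoc, besselSymbol]

lemma natDegree_besselSymbol_le (k : ℕ) : (besselSymbol k).natDegree ≤ k + 1 := by
  induction k with
  | zero => simp [besselSymbol]
  | succ k ih =>
    rw [besselSymbol_succ]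
    exact natDegree_mul_le_of_le ih (by compute_degree)

lemma support_besselSymbol_subset (k : ℕ) :
    (besselSymbol k).support ⊆ Finset.Icc 1 (k + 1) := by
  intro j hj
  have hj0 : j ≠ 0 := by
    rintro rfl
    simp [besselSymbol] at hj
  exact Finset.mem_Icc.2 ⟨Nat.one_le_iff_ne_zero.2 hj0,
    (le_natDegree_of_mem_supp j hj).trans (natDegree_besselSymbol_le k)⟩

variable [CompleteSpace E]

lemma integral_cos_smul_eq_sum_besselSymbol {k : ℕ} {f : ℝ → E} (hf : EulerIntegrable (k + 1) f)
    (v : ℝ) :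
    ∫ t, Real.cos (v * t) • f t =
      (besselSymbol k).sum fun j c => c • ∫ t, Bk k (t * v) • eulerOp^[j] f t := by
  induction k with
  | zero =>
    have hX : besselSymbol 0 = monomial 1 (-1) := by
      simp [besselSymbol, ← monomial_one_one_eq_X]
    rw [integral_cos_smul_eq_neg_integral_Bk_zero_smul hf, hX,
      sum_monomial_index _ _ (zero_smul ℝ _), neg_one_smul, Function.iterate_one]
  | succ k ih =>
    rw [ih (hf.mono (by lia)), besselSymbol_succ]
    refine sum_smul_eq_sum_mul_one_sub_C_mul_X _ _ fun j hj => ?_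
    have hjk := (Finset.mem_Icc.1 (support_besselSymbol_subset k hj)).2
    rw [integral_Bk_smul_eq_integral_Bk_succ_smul ((hf.mono (by lia)).iterate_eulerOp j),
      Function.iterate_succ_apply']

theorem stmt0_general (k : ℕ) {f : ℝ → E} (hf : EulerIntegrable (k + 1) f) (v : ℝ) :
    ∫ t, Real.cos (v * t) • f t = ∑ j ∈ Finset.Icc 1 (k + 1),
      (besselSymbol k).coeff j • ∫ t, Bk k (t * v) • eulerOp^[j] f t :=
  (integral_cos_smul_eq_sum_besselSymbol hf v).trans
    (sum_eq_of_subset _ (fun _ => by rw [zero_smul]) (support_besselSymbol_subset k))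

end Symbol

theorem stmt0 (k : ℕ) (hk : 0 < k) :
    ∃ c : ℕ → ℂ, ∀ f : ℝ → ℂ, ContDiff ℝ (k + 1 : ℕ) f →
      (∀ ℓ : ℕ, ℓ ≤ k + 1 →
        Integrable (fun t : ℝ => (t : ℂ) ^ ℓ * iteratedDeriv ℓ f t)) →
      (∀ ℓ : ℕ, ℓ ≤ k + 1 →
        Tendsto (fun t : ℝ => (t : ℂ) ^ ℓ * iteratedDeriv ℓ f t) (cocompact ℝ) (nhds 0)) →
      ∀ v : ℝ,
        (∫ t : ℝ, f t * (Real.cos (v * t) : ℂ)) =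
          ∑ j ∈ Finset.Icc 1 (k + 1), c j * ∫ t : ℝ, Oop^[j] f t * (Bk k (t * v) : ℂ) := by
  refine ⟨fun j => (besselSymbol k).coeff j, fun f hf hint _ v => ?_⟩
  have hfE : EulerIntegrable (k + 1) f := ⟨hf, by simpa using hint⟩
  simpa [Oop_eq_eulerOp, mul_comm] using stmt0_general k hfE v
end
end

section
/- Let k be a nonnegative integer and C ≥ 0. Let T be an even tempered distribution on ℝ, i.e. a continuous linear functional on the Schwartz space 𝒮(ℝ) satisfying T(φ(−·)) = T(φ) for all φ ∈ 𝒮(ℝ), and suppose the Fourier transform of T is a function of class C^{k+2} satisfying a Mihlin condition of order k+2: there is a C^{k+2} function g : ℝ → ℂ with |g^{(j)}(ζ)| ≤ C (1+|ζ|)^{−j} for all ζ ∈ ℝ and 0 ≤ j ≤ k+2, such that T(φ̂) = ∫_ℝ g(ζ) φ(ζ) dζ for all φ ∈ 𝒮(ℝ). Then there is a constant C″, depending only on k, such that for each ℓ ∈ {0, 1, …, k} there exists a measurable function h_ℓ : ℝ → ℂ with ‖h_ℓ‖_{L^∞} ≤ C″·C and T(A^ℓ(t φ(t))) = ∫_ℝ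 h_ℓ(t) φ(t) dt for all φ ∈ 𝒮(ℝ); that is, the tempered distribution t · O^ℓ T is given by a bounded function with sup norm at most C″·C. (This is Lemma 5.3(i) of the paper.) -/
open MeasureTheory Filter

noncomputable section

/-- The operator `(A ψ)(t) = -(t ψ(t))' = -ψ(t) - t ψ'(t)`, the (negative) formal adjoint of
`(O f)(t) = t f'(t)`. -/
def Aop : (ℝ → ℂ) → (ℝ → ℂ) := fun ψ t => -ψ t - (t : ℂ) * deriv ψ t

/-!
If the transform of `T` is `g`, then the transform of `T ∘ A` is `A g`, because
`A φ̂ = (x φ')^` and `A` is the transpose of `x d/dx`. Applying `A` costs one order in the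
Mihlin condition, so everything reduces to `ℓ = 0` and `f = A^ℓ g`, which satisfies the condition of
order two. There `t T` is the function `i (2π)⁻¹ ∫ f'(x) e^{itx} dx`, and the truncated integrals
over `[-R, R]` are bounded uniformly in `R` and `t`. For `|x| ≤ 1 / |t|`, one integration by parts
transfers the derivative to the exponential, and the boundedness of `f` is enough. For
`|x| ≥ 1 / |t|`, one integration by parts in the other direction gains a factor `1 / |t|`, against
which the decay of `f'` and `f''` is integrable.
-/

section Mihlin

/-- The Mihlin condition of order `n` with constant `C`: `f` is of class `C^n` and its derivatives
up to order `n` satisfy `|f^(j)(x)| ≤ C (1 + |x|)^(-j)`. -/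
structure IsMihlin (n : ℕ) (C : ℝ) (f : ℝ → ℂ) : Prop where
  contDiff : ContDiff ℝ n f
  norm_iteratedDeriv_le : ∀ x : ℝ, ∀ j : ℕ, j ≤ n → ‖iteratedDeriv j f x‖ ≤ C / (1 + |x|) ^ j

variable {m n : ℕ} {C D : ℝ} {f : ℝ → ℂ}

namespace IsMihlin

lemma mono (hf : IsMihlin n C f) (hmn : m ≤ n) (hCD : C ≤ D) : IsMihlin m D f :=
  ⟨hf.contDiff.of_le (by exact_mod_cast hmn), fun x j hj =>
    (hf.norm_iteratedDeriv_le x j (hj.trans hmn)).trans (by gcongr)⟩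

lemma norm_le (hf : IsMihlin n C f) (x : ℝ) : ‖f x‖ ≤ C := by
  simpa using hf.norm_iteratedDeriv_le x 0 n.zero_le

lemma nonneg (hf : IsMihlin n C f) : 0 ≤ C :=
  (norm_nonneg _).trans (hf.norm_le 0)

lemma norm_deriv_le (hf : IsMihlin (n + 1) C f) (x : ℝ) : ‖deriv f x‖ ≤ C / (1 + |x|) := by
  simpa using hf.norm_iteratedDeriv_le x 1 (by omega)

lemma norm_deriv_le_const (hf : IsMihlin (n + 1) C f) (x : ℝ) : ‖deriv f x‖ ≤ C :=
  (hf.norm_deriv_le x).trans (div_le_self hf.nonneg (by linarith [abs_nonneg x]))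

lemma hasDerivAt_iteratedDeriv {j : ℕ} (hf : IsMihlin n C f) (hj : j < n) (x : ℝ) :
    HasDerivAt (iteratedDeriv j f) (iteratedDeriv (j + 1) f x) x := by
  rw [iteratedDeriv_succ]
  exact (hf.contDiff.differentiable_iteratedDeriv j (by exact_mod_cast hj) x).hasDerivAt

lemma hasDerivAt (hf : IsMihlin (n + 1) C f) (x : ℝ) : HasDerivAt f (deriv f x) x := by
  simpa using hf.hasDerivAt_iteratedDeriv n.succ_pos x

lemma hasDerivAt_deriv (hf : IsMihlin (n + 2) C f) (x : ℝ) :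
    HasDerivAt (deriv f) (iteratedDeriv 2 f x) x := by
  simpa using hf.hasDerivAt_iteratedDeriv (show 1 < n + 2 by omega) x

lemma continuous_deriv (hf : IsMihlin (n + 1) C f) : Continuous (deriv f) :=
  hf.contDiff.continuous_deriv (by exact_mod_cast Nat.le_add_left 1 n)

lemma integrable_mul (hf : IsMihlin n C f) {u : ℝ → ℂ} (hu : Integrable u) :
    Integrable (fun x => f x * u x) :=
  hu.bdd_mul hf.contDiff.continuous.aestronglyMeasurable (ae_of_all _ hf.norm_le)

lemma integrable_deriv_mul (hf : IsMihlin (n + 1) C f) {u : ℝ → ℂ} (hu : Integrable u) :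
    Integrable (fun x => deriv f x * u x) :=
  hu.bdd_mul hf.continuous_deriv.aestronglyMeasurable (ae_of_all _ hf.norm_deriv_le_const)

lemma integrable_iteratedDeriv_two (hf : IsMihlin (n + 2) C f) :
    Integrable (iteratedDeriv 2 f) := by
  have hC := hf.nonneg
  refine (integrable_inv_one_add_sq.const_mul C).mono'
    (hf.contDiff.continuous_iteratedDeriv 2
      (by exact_mod_cast Nat.le_add_left 2 n)).aestronglyMeasurable (ae_of_all _ fun x => ?_)
  calc ‖iteratedDeriv 2 f x‖ ≤ C / (1 + |x|) ^ 2 := hf.norm_iteratedDeriv_le x 2 (by omega)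
    _ ≤ C * (1 + x ^ 2)⁻¹ := by
      rw [div_eq_mul_inv]
      gcongr
      nlinarith [abs_nonneg x, sq_abs x]

lemma comp_neg (hf : IsMihlin n C f) : IsMihlin n C (fun x => f (-x)) :=
  ⟨hf.contDiff.comp contDiff_neg, fun x j hj => by
    simpa [iteratedDeriv_comp_neg, norm_smul] using hf.norm_iteratedDeriv_le (-x) j hj⟩

lemma iteratedDeriv_aop (hf : IsMihlin (n + 1) C f) {j : ℕ} (hj : j ≤ n) :
    iteratedDeriv j (Aop f) =
      fun x => -((j + 1) * iteratedDeriv j f x + x * iteratedDeriv (j + 1) f x) := by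
  induction j with
  | zero =>
    ext x
    simp only [iteratedDeriv_zero, Aop, Nat.cast_zero, zero_add, one_mul, iteratedDeriv_one]
    ring
  | succ j ih =>
    ext x
    rw [iteratedDeriv_succ, ih (by omega)]
    have hjn : j < n + 1 := by omega
    have hderiv := ((hf.hasDerivAt_iteratedDeriv hjn x).const_mul ((j : ℂ) + 1)).add
      (Complex.ofRealCLM.hasDerivAt.mul (hf.hasDerivAt_iteratedDeriv (j := j + 1) (by omega) x))
    refine hderiv.neg.deriv.trans ?_
    simp only [Complex.ofRealCLM_apply, Complex.ofReal_one]
    push_cast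
    ring

lemma aop (hf : IsMihlin (n + 1) C f) : IsMihlin n ((n + 2) * C) (Aop f) := by
  refine ⟨?_, fun x j hj => ?_⟩
  · have hderiv : ContDiff ℝ n (deriv f) :=
      (contDiff_succ_iff_deriv.1 (by exact_mod_cast hf.contDiff)).2.2
    exact (hf.mono n.le_succ le_rfl).contDiff.neg.sub (Complex.ofRealCLM.contDiff.mul hderiv)
  · rw [hf.iteratedDeriv_aop hj, norm_neg]
    have hj' : (j : ℝ) ≤ n := by exact_mod_cast hj
    have hj1 : ‖(j : ℂ) + 1‖ = j + 1 := by exact_mod_cast Complex.norm_natCast (j + 1)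
    calc ‖(j + 1) * iteratedDeriv j f x + x * iteratedDeriv (j + 1) f x‖
        ≤ (j + 1) * ‖iteratedDeriv j f x‖ + |x| * ‖iteratedDeriv (j + 1) f x‖ := by
          refine (norm_add_le _ _).trans_eq ?_
          rw [norm_mul, norm_mul, hj1, Complex.norm_real, Real.norm_eq_abs]
      _ ≤ (n + 1) * (C / (1 + |x|) ^ j) + (1 + |x|) * (C / (1 + |x|) ^ (j + 1)) := by
          gcongr
          · exact hf.norm_iteratedDeriv_le x j (by omega)
          · linarith
          · exact hf.norm_iteratedDeriv_le x (j + 1) (by omega)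
      _ = (n + 2) * C / (1 + |x|) ^ j := by
          field_simp
          ring

lemma iterate_aop (ℓ : ℕ) (hf : IsMihlin (n + ℓ) C f) :
    IsMihlin n ((n + ℓ + 1) ^ ℓ * C) (Aop^[ℓ] f) := by
  induction ℓ generalizing C f with
  | zero => simpa using hf
  | succ ℓ ih =>
    have hC := hf.nonneg
    refine (ih hf.aop).mono le_rfl ?_
    calc ((n : ℝ) + ℓ + 1) ^ ℓ * (((n + ℓ : ℕ) + 2) * C)
        ≤ (n + (ℓ + 1) + 1) ^ ℓ * (((n + ℓ : ℕ) + 2) * C) := by gcongr; linarith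
      _ = (n + (ℓ + 1 : ℕ) + 1) ^ (ℓ + 1) * C := by push_cast; ring

end IsMihlin

end Mihlin

section Oscillation

open Complex

variable {C : ℝ} {f f' : ℝ → ℂ}

lemma norm_mul_exp_I_mul (z : ℂ) (y : ℝ) : ‖z * exp (I * y)‖ = ‖z‖ := by
  rw [norm_mul, norm_exp_I_mul_ofReal, mul_one]

lemma I_mul_integral_mul_exp (hf : ∀ x, HasDerivAt f (f' x) x) (hf' : Continuous f')
    (a b t : ℝ) :
    I * t * ∫ x in a..b, f x * exp (I * (t * x : ℝ)) =
      f b * exp (I * (t * b : ℝ)) - f a * exp (I * (t * a : ℝ)) -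
        ∫ x in a..b, f' x * exp (I * (t * x : ℝ)) := by
  have hexp (x : ℝ) : HasDerivAt (fun x : ℝ => exp (I * (t * x : ℝ)))
      (exp (I * (t * x : ℝ)) * (I * t)) x := by
    simpa using ((((hasDerivAt_id x).const_mul t).ofReal_comp).const_mul I).cexp
  rw [← intervalIntegral.integral_mul_deriv_eq_deriv_mul (fun x _ => hf x) (fun x _ => hexp x)
    (hf'.intervalIntegrable _ _) (Continuous.intervalIntegrable (by fun_prop) _ _),
    ← intervalIntegral.integral_const_mul]
  congr 1 with x
  ring

lemma norm_integral_deriv_mul_exp_le (hf : ∀ x, HasDerivAt f (f' x) x) (hf' : Continuous f')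
    (hC : ∀ x, ‖f x‖ ≤ C) (a b t : ℝ) :
    ‖∫ x in a..b, f' x * exp (I * (t * x : ℝ))‖ ≤ (2 + |t| * |b - a|) * C := by
  have hint : ‖∫ x in a..b, f x * exp (I * (t * x : ℝ))‖ ≤ C * |b - a| :=
    intervalIntegral.norm_integral_le_of_norm_le_const fun x _ => by
      rw [norm_mul_exp_I_mul]
      exact hC x
  have hparts := I_mul_integral_mul_exp hf hf' a b t
  calc ‖∫ x in a..b, f' x * exp (I * (t * x : ℝ))‖
      = ‖f b * exp (I * (t * b : ℝ)) - f a * exp (I * (t * a : ℝ)) -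
          I * t * ∫ x in a..b, f x * exp (I * (t * x : ℝ))‖ := by
        rw [hparts, sub_sub_cancel]
    _ ≤ ‖f b‖ + ‖f a‖ + |t| * ‖∫ x in a..b, f x * exp (I * (t * x : ℝ))‖ := by
        refine (norm_sub_le _ _).trans (add_le_add ((norm_sub_le _ _).trans_eq ?_) ?_)
        · rw [norm_mul_exp_I_mul, norm_mul_exp_I_mul]
        · simp
    _ ≤ C + C + |t| * (C * |b - a|) := by
        gcongr
        exacts [hC b, hC a]
    _ = (2 + |t| * |b - a|) * C := by ring

lemma integral_const_div_sq {a b : ℝ} (ha : 0 < a) (hab : a ≤ b) (C : ℝ) :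
    IntervalIntegrable (fun x : ℝ => C / x ^ 2) volume a b ∧
      ∫ x in a..b, C / x ^ 2 = C / a - C / b := by
  have hpos {x : ℝ} (hx : x ∈ Set.uIcc a b) : x ≠ 0 := by
    rw [Set.uIcc_of_le hab] at hx
    exact (ha.trans_le hx.1).ne'
  have hint : IntervalIntegrable (fun x : ℝ => C / x ^ 2) volume a b :=
    ContinuousOn.intervalIntegrable <|
      continuousOn_const.div (by fun_prop) fun x hx => pow_ne_zero 2 (hpos hx)
  refine ⟨hint, ?_⟩
  rw [intervalIntegral.integral_eq_sub_of_hasDerivAt (f := fun x => -(C / x)) _ hint]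
  · ring
  · intro x hx
    simpa [div_eq_mul_inv] using ((hasDerivAt_inv (hpos hx)).const_mul C).fun_neg

lemma abs_mul_norm_integral_mul_exp_le (hf : ∀ x, HasDerivAt f (f' x) x) (hf' : Continuous f')
    (h0 : ∀ x > 0, ‖f x‖ ≤ C / x) (h1 : ∀ x > 0, ‖f' x‖ ≤ C / x ^ 2) {a b : ℝ} (ha : 0 < a)
    (hab : a ≤ b) (t : ℝ) :
    |t| * ‖∫ x in a..b, f x * exp (I * (t * x : ℝ))‖ ≤ 2 * C / a := by
  obtain ⟨hint, hval⟩ := integral_const_div_sq ha hab C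
  have hf'_int : ‖∫ x in a..b, f' x * exp (I * (t * x : ℝ))‖ ≤ C / a - C / b := by
    rw [← hval]
    refine intervalIntegral.norm_integral_le_of_norm_le hab (ae_of_all _ fun x hx => ?_) hint
    rw [norm_mul_exp_I_mul]
    exact h1 x (ha.trans hx.1)
  calc |t| * ‖∫ x in a..b, f x * exp (I * (t * x : ℝ))‖
      = ‖I * t * ∫ x in a..b, f x * exp (I * (t * x : ℝ))‖ := by simp
    _ ≤ ‖f b‖ + ‖f a‖ + ‖∫ x in a..b, f' x * exp (I * (t * x : ℝ))‖ := by
        rw [I_mul_integral_mul_exp hf hf']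
        refine (norm_sub_le _ _).trans (add_le_add_left ((norm_sub_le _ _).trans_eq ?_) _)
        rw [norm_mul_exp_I_mul, norm_mul_exp_I_mul]
    _ ≤ C / b + C / a + (C / a - C / b) := by
        gcongr
        exacts [h0 b (ha.trans_le hab), h0 a ha]
    _ = 2 * C / a := by ring

namespace IsMihlin

lemma norm_integral_zero_deriv_mul_exp_le (hf : IsMihlin 2 C f) {R : ℝ} (hR : 0 ≤ R) (t : ℝ) :
    ‖∫ x in (0 : ℝ)..R, deriv f x * exp (I * (t * x : ℝ))‖ ≤ 5 * C := by
  have hC := hf.nonneg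
  have head {b : ℝ} (hb : 0 ≤ b) (htb : |t| * b ≤ 1) :
      ‖∫ x in (0 : ℝ)..b, deriv f x * exp (I * (t * x : ℝ))‖ ≤ 3 * C := by
    refine (norm_integral_deriv_mul_exp_le hf.hasDerivAt hf.continuous_deriv hf.norm_le
      0 b t).trans ?_
    rw [sub_zero, abs_of_nonneg hb]
    gcongr
    linarith
  rcases le_or_gt (|t| * R) 1 with htR | htR
  · linarith [head hR htR]
  have ht : 0 < |t| := (abs_nonneg t).lt_of_ne' fun h => by norm_num [h] at htR
  have hcut : |t|⁻¹ ≤ R := (inv_le_iff_one_le_mul₀' ht).2 htR.le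
  have tail : ‖∫ x in |t|⁻¹..R, deriv f x * exp (I * (t * x : ℝ))‖ ≤ 2 * C := by
    have key := abs_mul_norm_integral_mul_exp_le (C := C) hf.hasDerivAt_deriv
      (hf.contDiff.continuous_iteratedDeriv 2 le_rfl)
      (fun x hx => (hf.norm_deriv_le x).trans ?_)
      (fun x hx => (hf.norm_iteratedDeriv_le x 2 le_rfl).trans ?_) (inv_pos.2 ht) hcut t
    · rw [div_inv_eq_mul, mul_comm] at key
      exact le_of_mul_le_mul_right key ht
    all_goals
      gcongr
      linarith [le_abs_self x]
  have hint (a b : ℝ) :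
      IntervalIntegrable (fun x => deriv f x * exp (I * (t * x : ℝ))) volume a b :=
    (hf.continuous_deriv.mul (by fun_prop)).intervalIntegrable a b
  rw [← intervalIntegral.integral_add_adjacent_intervals (hint 0 |t|⁻¹) (hint |t|⁻¹ R)]
  linarith [norm_add_le (∫ x in (0 : ℝ)..|t|⁻¹, deriv f x * exp (I * (t * x : ℝ)))
    (∫ x in |t|⁻¹..R, deriv f x * exp (I * (t * x : ℝ))),
    head (inv_nonneg.2 ht.le) (mul_inv_cancel₀ ht.ne').le]

lemma norm_integral_symm_deriv_mul_exp_le (hf : IsMihlin 2 C f) {R : ℝ} (hR : 0 ≤ R) (t : ℝ) :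
    ‖∫ x in -R..R, deriv f x * exp (I * (t * x : ℝ))‖ ≤ 10 * C := by
  have hreflect : ∫ x in -R..0, deriv f x * exp (I * (t * x : ℝ)) =
      -∫ x in (0 : ℝ)..R, deriv (fun y => f (-y)) x * exp (I * (-t * x : ℝ)) := by
    rw [← intervalIntegral.integral_neg, ← neg_zero, ← intervalIntegral.integral_comp_neg, neg_zero]
    simp [deriv_comp_neg]
  have hint (a b : ℝ) :
      IntervalIntegrable (fun x => deriv f x * exp (I * (t * x : ℝ))) volume a b :=
    (hf.continuous_deriv.mul (by fun_prop)).intervalIntegrable a b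
  have hneg := hf.comp_neg.norm_integral_zero_deriv_mul_exp_le hR (-t)
  rw [← norm_neg, ← hreflect] at hneg
  rw [← intervalIntegral.integral_add_adjacent_intervals (hint (-R) 0) (hint 0 R)]
  linarith [norm_add_le (∫ x in -R..0, deriv f x * exp (I * (t * x : ℝ)))
    (∫ x in (0 : ℝ)..R, deriv f x * exp (I * (t * x : ℝ))),
    hf.norm_integral_zero_deriv_mul_exp_le hR t]

end IsMihlin

/-- The Fourier transform `∫ f'(x) e^{itx} dx` away from `t = 0`, in the absolutely convergent form
obtained by one integration by parts. At `t = 0`, where that integral need not converge even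
conditionally, the value is `0` because of the division. -/
def derivKernel (f : ℝ → ℂ) (t : ℝ) : ℂ :=
  I / t * ∫ x : ℝ, iteratedDeriv 2 f x * exp (I * (t * x : ℝ))

lemma measurable_derivKernel (hf : Continuous (iteratedDeriv 2 f)) :
    Measurable (derivKernel f) := by
  have hphase : Continuous fun p : ℝ × ℝ => iteratedDeriv 2 f p.2 * exp (I * (p.1 * p.2 : ℝ)) := by
    fun_prop
  have hint := hphase.stronglyMeasurable.integral_prod_right' (ν := volume)
  exact (measurable_const.div measurable_ofReal).mul hint.measurable

namespace IsMihlin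

lemma tendsto_integral_deriv_mul_exp (hf : IsMihlin 2 C f) {t : ℝ} (ht : t ≠ 0) :
    Tendsto (fun R : ℝ => ∫ x in -R..R, deriv f x * exp (I * (t * x : ℝ))) atTop
      (nhds (derivKernel f t)) := by
  have hboundary : Tendsto (fun x : ℝ => deriv f x * exp (I * (t * x : ℝ))) (cocompact ℝ)
      (nhds 0) := by
    refine squeeze_zero_norm (a := fun x => C / (1 + |x|)) (fun x => ?_) ?_
    · rw [norm_mul_exp_I_mul]
      exact hf.norm_deriv_le x
    · exact (tendsto_atTop_add_const_left _ 1 tendsto_norm_cocompact_atTop).const_div_atTop C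
  have hint : Integrable fun x => iteratedDeriv 2 f x * exp (I * (t * x : ℝ)) :=
    hf.integrable_iteratedDeriv_two.mul_bdd (c := 1) (by fun_prop)
      (ae_of_all _ fun x => (norm_exp_I_mul_ofReal _).le)
  have hlim := ((hboundary.comp (tendsto_id.mono_right atTop_le_cocompact)).sub
    (hboundary.comp (tendsto_neg_atTop_atBot.mono_right atBot_le_cocompact))).sub
    (intervalIntegral_tendsto_integral hint tendsto_neg_atTop_atBot tendsto_id)
  have htc : (t : ℂ) ≠ 0 := by exact_mod_cast ht
  convert hlim.const_mul (-I / t) using 1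
  · ext R
    have hparts := I_mul_integral_mul_exp hf.hasDerivAt_deriv
      (hf.contDiff.continuous_iteratedDeriv 2 le_rfl) (-R) R t
    simp only [Function.comp_apply, id]
    rw [← hparts]
    field_simp
    simp
  · rw [derivKernel]
    ring_nf

lemma norm_derivKernel_le (hf : IsMihlin 2 C f) (t : ℝ) : ‖derivKernel f t‖ ≤ 10 * C := by
  rcases eq_or_ne t 0 with rfl | ht
  · simpa [derivKernel] using hf.nonneg
  · refine le_of_tendsto (hf.tendsto_integral_deriv_mul_exp ht).norm ?_
    filter_upwards [eventually_ge_atTop 0] with R hR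
    exact hf.norm_integral_symm_deriv_mul_exp_le hR t

end IsMihlin

lemma integral_mul_integral_exp_comm {u φ : ℝ → ℂ} {μ ν : Measure ℝ} [SFinite μ] [SFinite ν]
    (hu : Integrable u μ) (hφ : Integrable φ ν) :
    ∫ x, u x * ∫ t, φ t * exp (I * (t * x : ℝ)) ∂ν ∂μ =
      ∫ t, (∫ x, u x * exp (I * (t * x : ℝ)) ∂μ) * φ t ∂ν := by
  have hprod : Integrable (Function.uncurry fun x t => u x * φ t * exp (I * (t * x : ℝ)))
      (μ.prod ν) :=
    (hu.mul_prod hφ).mul_bdd (c := 1)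
      (Continuous.aestronglyMeasurable (by fun_prop))
      (ae_of_all _ fun p => (norm_exp_I_mul_ofReal _).le)
  simp_rw [← integral_const_mul, ← integral_mul_const, ← mul_assoc]
  rw [integral_integral_swap hprod]
  simp_rw [mul_right_comm]

lemma IsMihlin.integral_deriv_mul_eq (hf : IsMihlin 2 C f) {φ : ℝ → ℂ} (hφ : Integrable φ)
    (hφ' : Integrable fun x : ℝ => ∫ t, φ t * exp (I * (t * x : ℝ))) :
    ∫ x, deriv f x * ∫ t, φ t * exp (I * (t * x : ℝ)) = ∫ t, derivKernel f t * φ t := by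
  have hwindow : Tendsto
      (fun R : ℝ => ∫ x in -R..R, deriv f x * ∫ t, φ t * exp (I * (t * x : ℝ))) atTop
      (nhds (∫ x, deriv f x * ∫ t, φ t * exp (I * (t * x : ℝ)))) :=
    intervalIntegral_tendsto_integral (hf.integrable_deriv_mul hφ') tendsto_neg_atTop_atBot
      tendsto_id
  have hkernel : Tendsto
      (fun R : ℝ => ∫ t, (∫ x in -R..R, deriv f x * exp (I * (t * x : ℝ))) * φ t) atTop
      (nhds (∫ t, derivKernel f t * φ t)) := by
    have hcont (R : ℝ) : Continuous fun t => ∫ x in -R..R, deriv f x * exp (I * (t * x : ℝ)) := by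
      have := hf.continuous_deriv
      exact intervalIntegral.continuous_parametric_intervalIntegral_of_continuous'
        (by fun_prop) _ _
    refine tendsto_integral_filter_of_dominated_convergence (fun t => 10 * C * ‖φ t‖)
      (.of_forall fun R => (hcont R).aestronglyMeasurable.mul hφ.aestronglyMeasurable)
      ?_ (hφ.norm.const_mul _) ?_
    · filter_upwards [eventually_ge_atTop 0] with R hR
      filter_upwards with t
      rw [norm_mul]
      gcongr
      exact hf.norm_integral_symm_deriv_mul_exp_le hR t
    · filter_upwards [Measure.ae_ne volume 0] with t ht
      exact (hf.tendsto_integral_deriv_mul_exp ht).mul_const _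
  refine tendsto_nhds_unique (hwindow.congr' ?_) hkernel
  filter_upwards [eventually_ge_atTop 0] with R hR
  simp_rw [intervalIntegral.integral_of_le (neg_le_self hR)]
  exact integral_mul_integral_exp_comm
    (hf.continuous_deriv.integrableOn_Icc.mono_set Set.Ioc_subset_Icc_self) hφ

end Oscillation

section Fourier

open Complex
open scoped SchwartzMap FourierTransform Real

/-- The operator `φ ↦ x φ(x)` on Schwartz functions. -/
def mulVar : 𝓢(ℝ, ℂ) →L[ℂ] 𝓢(ℝ, ℂ) :=
  SchwartzMap.smulLeftCLM ℂ fun x : ℝ => (x : ℂ)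

/-- The dilation `φ ↦ φ(x u)` of Schwartz functions. -/
def dilation (u : ℝˣ) : 𝓢(ℝ, ℂ) →L[ℂ] 𝓢(ℝ, ℂ) :=
  SchwartzMap.compCLMOfContinuousLinearEquiv ℂ (ContinuousLinearEquiv.unitsEquivAut ℝ u)

/-- The number `2π` as a unit, the ratio between frequency and angular frequency. -/
def twoPi : ℝˣ := Units.mk0 (2 * π) Real.two_pi_pos.ne'

/-- The Fourier transform `∫ φ(x) e^{-iξx} dx` on Schwartz functions, that is, Mathlib's transform
`∫ φ(x) e^{-2πiξx} dx` in the angular frequency variable. -/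
def angularFourier : 𝓢(ℝ, ℂ) →L[ℂ] 𝓢(ℝ, ℂ) :=
  dilation twoPi⁻¹ ∘L FourierTransform.fourierCLM ℂ 𝓢(ℝ, ℂ)

/-- The operator `A` as an endomorphism of Schwartz space. -/
def eulerAdjoint (φ : 𝓢(ℝ, ℂ)) : 𝓢(ℝ, ℂ) :=
  -SchwartzMap.derivCLM ℂ ℂ (mulVar φ)

/-- The Fourier transform of the functional `T` is the function `g`, that is, `T(φ̂) = ∫ g φ`.
Here `T` is a bare function, so that it can be composed with the bare function `eulerAdjoint`. -/
def HasFourierDensity (T : 𝓢(ℝ, ℂ) → ℂ) (g : ℝ → ℂ) : Prop :=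
  ∀ φ ψ : 𝓢(ℝ, ℂ), (∀ ξ : ℝ, ψ ξ = ∫ x : ℝ, φ x * exp (-(I * ξ * x))) →
    T ψ = ∫ ζ : ℝ, g ζ * φ ζ

variable {n : ℕ} {C : ℝ} {f g : ℝ → ℂ} {T : 𝓢(ℝ, ℂ) → ℂ}

lemma mulVar_apply (φ : 𝓢(ℝ, ℂ)) (x : ℝ) : mulVar φ x = x * φ x :=
  SchwartzMap.smulLeftCLM_apply_apply (by fun_prop) φ x

lemma dilation_apply (u : ℝˣ) (φ : 𝓢(ℝ, ℂ)) (x : ℝ) : dilation u φ x = φ (x * u) := by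
  simp [dilation]

lemma angularFourier_apply (φ : 𝓢(ℝ, ℂ)) (ξ : ℝ) :
    angularFourier φ ξ = 𝓕 (φ : ℝ → ℂ) (ξ / (2 * π)) := by
  simp [angularFourier, dilation_apply, twoPi, SchwartzMap.fourier_coe, div_eq_mul_inv]

lemma angularFourier_eq_integral (φ : 𝓢(ℝ, ℂ)) (ξ : ℝ) :
    angularFourier φ ξ = ∫ x : ℝ, φ x * exp (-(I * ξ * x)) := by
  rw [angularFourier_apply, Real.fourier_real_eq_integral_exp_smul]
  congr with x
  rw [smul_eq_mul, mul_comm]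
  congr 2
  push_cast
  field

lemma exists_angularFourier_eq (φ : 𝓢(ℝ, ℂ)) :
    ∃ ψ : 𝓢(ℝ, ℂ), angularFourier ψ = φ ∧
      ∀ x : ℝ, ψ x = (2 * π)⁻¹ * ∫ t : ℝ, φ t * exp (I * (t * x : ℝ)) := by
  refine ⟨𝓕⁻ (dilation twoPi φ), ?_, fun x => ?_⟩
  · ext ξ
    rw [angularFourier_apply, ← SchwartzMap.fourier_coe,
      FourierTransform.fourier_fourierInv_eq, dilation_apply]
    exact congrArg φ (div_mul_cancel₀ ξ Real.two_pi_pos.ne')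
  · have hscale := Measure.integral_comp_mul_left (fun t => φ t * exp (I * (t * x : ℝ))) (2 * π)
    rw [abs_of_pos (by positivity)] at hscale
    rw [← real_smul, ← hscale, SchwartzMap.fourierInv_coe, Real.fourierInv_eq_fourier_neg,
      Real.fourier_real_eq_integral_exp_smul]
    congr with t
    rw [smul_eq_mul, mul_comm, dilation_apply]
    congr 2
    · exact mul_comm _ _
    · push_cast
      ring

lemma derivCLM_angularFourier (φ : 𝓢(ℝ, ℂ)) :
    SchwartzMap.derivCLM ℂ ℂ (angularFourier φ) = angularFourier (-I • mulVar φ) := by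
  have hmul : Integrable fun x : ℝ => x • φ x := by
    simpa only [funext (mulVar_apply φ), real_smul] using (mulVar φ).integrable (μ := volume)
  ext ξ
  have hderiv := (Real.hasDerivAt_fourier φ.integrable hmul (ξ / (2 * π))).scomp ξ
    ((hasDerivAt_id ξ).div_const (2 * π))
  have hcoe : (fun x : ℝ => (-2 * π * I * x) • φ x) = ⇑((2 * π : ℂ) • -I • mulVar φ) := by
    ext x
    simp only [smul_apply, mulVar_apply, smul_eq_mul]
    ring
  rw [SchwartzMap.derivCLM_apply (𝕜 := ℂ), funext (angularFourier_apply φ)]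
  refine hderiv.deriv.trans ?_
  rw [hcoe, ← angularFourier_apply, map_smul, smul_apply, real_smul, smul_eq_mul, ← mul_assoc]
  push_cast
  field

lemma mulVar_angularFourier (φ : 𝓢(ℝ, ℂ)) :
    mulVar (angularFourier φ) = angularFourier (-I • SchwartzMap.derivCLM ℂ ℂ φ) := by
  ext ξ
  have hderiv := congrFun (Real.fourier_deriv φ.integrable φ.differentiable
    (SchwartzMap.derivCLM ℂ ℂ φ).integrable) (ξ / (2 * π))
  rw [map_smul, smul_apply, mulVar_apply, angularFourier_apply, angularFourier_apply]
  refine Eq.trans ?_ (congrArg (-I • ·) hderiv).symm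
  simp only [smul_eq_mul]
  push_cast
  field_simp
  rw [I_sq]
  ring

lemma eulerAdjoint_angularFourier (φ : 𝓢(ℝ, ℂ)) :
    eulerAdjoint (angularFourier φ) = angularFourier (mulVar (SchwartzMap.derivCLM ℂ ℂ φ)) := by
  rw [eulerAdjoint, mulVar_angularFourier, derivCLM_angularFourier, map_smul, map_smul, map_smul,
    smul_smul]
  simp

lemma coe_eulerAdjoint (φ : 𝓢(ℝ, ℂ)) : ⇑(eulerAdjoint φ) = Aop φ := by
  ext x
  have hderiv := Complex.ofRealCLM.hasDerivAt.mul (φ.differentiable x).hasDerivAt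
  have hcoe : ⇑(mulVar φ) = Complex.ofRealCLM * φ := funext (mulVar_apply φ)
  rw [eulerAdjoint, neg_apply, SchwartzMap.derivCLM_apply, hcoe, hderiv.deriv]
  simp only [ofRealCLM_apply, ofReal_one, one_mul, Aop]
  ring

lemma coe_iterate_eulerAdjoint (ℓ : ℕ) (φ : 𝓢(ℝ, ℂ)) :
    ⇑(eulerAdjoint^[ℓ] φ) = Aop^[ℓ] φ :=
  Function.Semiconj.iterate_right coe_eulerAdjoint ℓ φ

lemma IsMihlin.integral_mul_derivCLM (hf : IsMihlin (n + 1) C f) (φ : 𝓢(ℝ, ℂ)) :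
    ∫ x, f x * SchwartzMap.derivCLM ℂ ℂ φ x = -∫ x, deriv f x * φ x :=
  integral_mul_deriv_eq_deriv_mul_of_integrable (fun x _ => hf.hasDerivAt x)
    (fun x _ => (φ.differentiable x).hasDerivAt)
    (hf.integrable_mul (SchwartzMap.derivCLM ℂ ℂ φ).integrable)
    (hf.integrable_deriv_mul φ.integrable) (hf.integrable_mul φ.integrable)

lemma IsMihlin.integral_aop_mul (hf : IsMihlin (n + 1) C f) (φ : 𝓢(ℝ, ℂ)) :
    ∫ x, Aop f x * φ x = ∫ x, f x * mulVar (SchwartzMap.derivCLM ℂ ℂ φ) x := by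
  have hleibniz (x : ℝ) : mulVar (SchwartzMap.derivCLM ℂ ℂ φ) x =
      SchwartzMap.derivCLM ℂ ℂ (mulVar φ) x - φ x := by
    have h := congrFun (coe_eulerAdjoint φ) x
    simp only [eulerAdjoint, neg_apply, Aop] at h
    rw [mulVar_apply, SchwartzMap.derivCLM_apply (𝕜 := ℂ) (f := φ)]
    linear_combination h
  simp_rw [hleibniz, mul_sub]
  rw [integral_sub (hf.integrable_mul (SchwartzMap.integrable _)) (hf.integrable_mul φ.integrable),
    hf.integral_mul_derivCLM, sub_eq_add_neg, ← neg_add, add_comm,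
    ← integral_add (hf.integrable_mul φ.integrable)
      (hf.integrable_deriv_mul (mulVar φ).integrable), ← integral_neg]
  congr with x
  rw [Aop, mulVar_apply]
  ring

namespace HasFourierDensity

lemma apply_angularFourier (hT : HasFourierDensity T g) (φ : 𝓢(ℝ, ℂ)) :
    T (angularFourier φ) = ∫ ζ, g ζ * φ ζ :=
  hT φ _ (angularFourier_eq_integral φ)

lemma comp_eulerAdjoint (hT : HasFourierDensity T g) (hg : IsMihlin (n + 1) C g) :
    HasFourierDensity (T ∘ eulerAdjoint) (Aop g) := by
  intro φ ψ hψ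
  obtain rfl : angularFourier φ = ψ := by
    ext ξ
    rw [hψ, angularFourier_eq_integral]
  rw [Function.comp_apply, eulerAdjoint_angularFourier, hT.apply_angularFourier,
    hg.integral_aop_mul]

lemma comp_iterate_eulerAdjoint (ℓ : ℕ) (hT : HasFourierDensity T g)
    (hg : IsMihlin (n + ℓ) C g) :
    HasFourierDensity (T ∘ eulerAdjoint^[ℓ]) (Aop^[ℓ] g) := by
  induction ℓ generalizing T g C with
  | zero => exact hT
  | succ ℓ ih =>
    rw [Function.iterate_succ', ← Function.comp_assoc]
    exact ih (hT.comp_eulerAdjoint hg) hg.aop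

lemma apply_mulVar (hT : HasFourierDensity T g) (hg : IsMihlin 2 C g) (φ : 𝓢(ℝ, ℂ)) :
    T (mulVar φ) = ∫ t, I / (2 * π) * derivKernel g t * φ t := by
  obtain ⟨ψ, rfl, hψ⟩ := exists_angularFourier_eq φ
  set φ := angularFourier ψ
  have hψ' (x : ℝ) : ∫ t : ℝ, φ t * exp (I * (t * x : ℝ)) = 2 * π * ψ x := by
    rw [hψ]
    push_cast
    field
  have hint : Integrable fun x : ℝ => ∫ t : ℝ, φ t * exp (I * (t * x : ℝ)) := by
    simpa only [hψ'] using ψ.integrable.const_mul (2 * π : ℂ)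
  have hkernel := hg.integral_deriv_mul_eq φ.integrable hint
  simp_rw [hψ', mul_left_comm _ (2 * π : ℂ), integral_const_mul] at hkernel
  rw [mulVar_angularFourier, hT.apply_angularFourier]
  simp_rw [mul_assoc, integral_const_mul, ← hkernel]
  simp only [smul_apply, smul_eq_mul, mul_left_comm _ (-I), integral_const_mul,
    hg.integral_mul_derivCLM]
  field

lemma exists_bounded_density_mulVar (hT : HasFourierDensity T g) (hg : IsMihlin 2 C g) :
    ∃ h : ℝ → ℂ, Measurable h ∧ (∀ t, ‖h t‖ ≤ 2 * C) ∧
      ∀ φ : 𝓢(ℝ, ℂ), T (mulVar φ) = ∫ t, h t * φ t := by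
  refine ⟨fun t => I / (2 * π) * derivKernel g t,
    (measurable_derivKernel (hg.contDiff.continuous_iteratedDeriv 2 le_rfl)).const_mul _,
    fun t => ?_, hT.apply_mulVar hg⟩
  have hC := hg.nonneg
  calc ‖I / (2 * π) * derivKernel g t‖ = ‖derivKernel g t‖ / (2 * π) := by
        rw [norm_mul, norm_div, norm_I, ← ofReal_ofNat, ← ofReal_mul, norm_real,
          Real.norm_of_nonneg (by positivity), one_div_mul_eq_div]
    _ ≤ 10 * C / 5 := by
        gcongr
        · exact hg.norm_derivKernel_le t
        · linarith [Real.pi_gt_three]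
    _ = 2 * C := by ring

end HasFourierDensity

end Fourier

theorem stmt2_general {k ℓ : ℕ} {C : ℝ} {T : SchwartzMap ℝ ℂ → ℂ} {g : ℝ → ℂ}
    (hg : IsMihlin (k + 2) C g) (hT : HasFourierDensity T g) (hℓ : ℓ ≤ k) :
    ∃ h : ℝ → ℂ, Measurable h ∧ (∀ t : ℝ, ‖h t‖ ≤ 2 * (k + 3) ^ k * C) ∧
      ∀ φ χ : SchwartzMap ℝ ℂ, (∀ t : ℝ, χ t = Aop^[ℓ] (fun s : ℝ => (s : ℂ) * φ s) t) →
        T χ = ∫ t : ℝ, h t * φ t := by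
  have hgℓ : IsMihlin (2 + ℓ) C g := hg.mono (by omega) le_rfl
  have hAg : IsMihlin 2 ((k + 3) ^ k * C) (Aop^[ℓ] g) :=
    (hgℓ.iterate_aop ℓ).mono le_rfl <| by
      have hC := hg.nonneg
      have hℓk : (ℓ : ℝ) ≤ k := by exact_mod_cast hℓ
      have hbase : ((2 : ℕ) : ℝ) + ℓ + 1 ≤ k + 3 := by push_cast; linarith
      gcongr ?_ * C
      exact (pow_le_pow_left₀ (by positivity) hbase ℓ).trans
        (pow_le_pow_right₀ (by linarith [k.cast_nonneg (α := ℝ)]) hℓ)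
  obtain ⟨h, hmeas, hbound, heq⟩ :=
    (hT.comp_iterate_eulerAdjoint ℓ hgℓ).exists_bounded_density_mulVar hAg
  refine ⟨h, hmeas, fun t => (hbound t).trans_eq (mul_assoc _ _ _).symm, fun φ χ hχ => ?_⟩
  obtain rfl : eulerAdjoint^[ℓ] (mulVar φ) = χ := by
    ext t
    rw [hχ, coe_iterate_eulerAdjoint, funext (mulVar_apply φ)]
  exact heq φ

theorem stmt2 (k : ℕ) :
    ∃ C'' : ℝ, ∀ C : ℝ, 0 ≤ C →
      ∀ T : SchwartzMap ℝ ℂ →L[ℂ] ℂ,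
      -- `T` is even
      (∀ φ ψ : SchwartzMap ℝ ℂ, (∀ x : ℝ, ψ x = φ (-x)) → T ψ = T φ) →
      ∀ g : ℝ → ℂ, ContDiff ℝ (k + 2 : ℕ) g →
      -- Mihlin condition of order `k+2` on `g`
      (∀ ζ : ℝ, ∀ j : ℕ, j ≤ k + 2 → ‖iteratedDeriv j g ζ‖ ≤ C / (1 + |ζ|) ^ j) →
      -- the Fourier transform of `T` is the function `g`
      (∀ φ ψ : SchwartzMap ℝ ℂ,
        (∀ ξ : ℝ, ψ ξ = ∫ x : ℝ, φ x * Complex.exp (-(Complex.I * ξ * x))) →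
        T ψ = ∫ ζ : ℝ, g ζ * φ ζ) →
      -- conclusion: for each `ℓ ≤ k` the distribution `t · Oᶫ T` is a bounded function
      ∀ ℓ : ℕ, ℓ ≤ k → ∃ h : ℝ → ℂ, Measurable h ∧ (∀ t : ℝ, ‖h t‖ ≤ C'' * C) ∧
        ∀ φ χ : SchwartzMap ℝ ℂ,
          (∀ t : ℝ, χ t = Aop^[ℓ] (fun s : ℝ => (s : ℂ) * φ s) t) →
          T χ = ∫ t : ℝ, h t * φ t := by
  exact ⟨2 * (k + 3) ^ k, fun C _ T _ g hg hMihlin hT ℓ hℓ => stmt2_general ⟨hg, hMihlin⟩ hT hℓ⟩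
end
end
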